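/- arXiv:math/0505242 — 4 statements merged into one kernel-verified Lean document; each statement's English description precedes it below -/
import Mathlib

section
/- Let R be a commutative ring, E an R-module and A = End_R(E). If N is a direct summand of E, then Ψ(N) = {f ∈ A : range f ⊆ N} is a right ideal of A which is a direct summand of A as a right A-module, and Φ(Ψ(N)) = N; that is, the R-submodule of E generated by the ranges of all endomorphisms f with range f ⊆ N is exactly N. -/
/-- `Ψ(N) = {f ∈ End_R(E) : range f ⊆ N}`, as an `R`-submodule of `End_R(E)`. -/
def psi {R E : Type*} [CommRing R] [AddCommGroup E] [Module R E]
    (N : Submodule R E) : Submodule R (Module.End R E) where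
  carrier := {f | LinearMap.range f ≤ N}
  add_mem' := by
    intro f g hf hg x hx
    obtain ⟨y, rfl⟩ := LinearMap.mem_range.mp hx
    show f y + g y ∈ N
    exact N.add_mem (hf (LinearMap.mem_range_self f y)) (hg (LinearMap.mem_range_self g y))
  zero_mem' := by
    intro x hx
    obtain ⟨y, rfl⟩ := LinearMap.mem_range.mp hx
    exact N.zero_mem
  smul_mem' := by
    intro c f hf x hx
    obtain ⟨y, rfl⟩ := LinearMap.mem_range.mp hx
    show c • f y ∈ N
    exact N.smul_mem c (hf (LinearMap.mem_range_self f y))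

/-- `Φ(I)`: the `R`-submodule of `E` generated by the union of the ranges of all `f ∈ I`. -/
def phi {R E : Type*} [CommRing R] [AddCommGroup E] [Module R E]
    (I : Submodule R (Module.End R E)) : Submodule R E :=
  Submodule.span R (⋃ f ∈ I, (LinearMap.range f : Set E))

/-- A right ideal of `End_R(E)`: an `R`-submodule closed under composition on the right. -/
def IsRightIdeal {R E : Type*} [CommRing R] [AddCommGroup E] [Module R E]
    (I : Submodule R (Module.End R E)) : Prop :=
  ∀ f ∈ I, ∀ g : Module.End R E, f * g ∈ I

/-- A submodule `N` of a module `M` is a direct summand. -/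
def IsSummand {R M : Type*} [CommRing R] [AddCommGroup M] [Module R M]
    (N : Submodule R M) : Prop :=
  ∃ N' : Submodule R M, N ⊓ N' = ⊥ ∧ N ⊔ N' = ⊤

/-- A right ideal `I` of `End_R(E)` is a direct summand of `End_R(E)` as a right module
over itself: there is a right ideal `J` with `I ∩ J = 0` and `I + J = End_R(E)`. -/
def IsIdealSummand {R E : Type*} [CommRing R] [AddCommGroup E] [Module R E]
    (I : Submodule R (Module.End R E)) : Prop :=
  ∃ J : Submodule R (Module.End R E), IsRightIdeal J ∧ I ⊓ J = ⊥ ∧ I ⊔ J = ⊤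

/-!
If `E = N ⊕ N'` and `e` is the projection onto `N` along `N'`, then `f = e f + (1 - e) f` splits
every endomorphism between `Ψ(N)` and `Ψ(N')`. Moreover `Φ` is left adjoint to `Ψ`, so `Φ(Ψ(N)) ≤ N`,
with equality as soon as `N` is the range of an endomorphism such as `e`.
-/

section

variable {R E : Type*} [CommRing R] [AddCommGroup E] [Module R E]

theorem mem_psi {N : Submodule R E} {f : Module.End R E} :
    f ∈ psi N ↔ LinearMap.range f ≤ N :=
  Iff.rfl

theorem isRightIdeal_psi (N : Submodule R E) : IsRightIdeal (psi N) :=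
  fun f hf g => mem_psi.2 ((LinearMap.range_comp_le_range g f).trans (mem_psi.1 hf))

theorem gc_phi_psi : GaloisConnection (phi (R := R) (E := E)) psi :=
  fun _ _ => Submodule.span_le.trans Set.iUnion₂_subset_iff

theorem psi_bot : psi (⊥ : Submodule R E) = ⊥ := by
  ext f
  rw [mem_psi, le_bot_iff, LinearMap.range_eq_bot, Submodule.mem_bot]

theorem disjoint_psi {N N' : Submodule R E} (h : Disjoint N N') : Disjoint (psi N) (psi N') := by
  rw [disjoint_iff, ← gc_phi_psi.u_inf, h.eq_bot, psi_bot]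

theorem projection_mul_mem_psi {N N' : Submodule R E} (h : IsCompl N N') (f : Module.End R E) :
    N.projection N' h * f ∈ psi N :=
  isRightIdeal_psi N _ (mem_psi.2 (Submodule.range_projection h).le) f

theorem isCompl_psi {N N' : Submodule R E} (h : IsCompl N N') : IsCompl (psi N) (psi N') := by
  refine ⟨disjoint_psi h.disjoint, codisjoint_iff.2 (eq_top_iff.2 fun f _ => ?_)⟩
  have hf : N.projection N' h * f + N'.projection N h.symm * f = f :=
    LinearMap.ext fun x => Submodule.projection_add_projection_eq_self h (f x)
  exact Submodule.mem_sup.2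
    ⟨_, projection_mul_mem_psi h f, _, projection_mul_mem_psi h.symm f, hf⟩

theorem phi_psi_range (f : Module.End R E) :
    phi (psi (LinearMap.range f)) = LinearMap.range f :=
  le_antisymm (gc_phi_psi.l_u_le _) (mem_psi.1 (gc_phi_psi.le_u_l _ (mem_psi.2 le_rfl)))

theorem phi_psi_of_isCompl {N N' : Submodule R E} (h : IsCompl N N') : phi (psi N) = N := by
  simpa only [Submodule.range_projection] using phi_psi_range (N.projection N' h)

end

/-- If `N` is a direct summand of `E`, then `Ψ(N)` is a right ideal of `A = End_R(E)` which is
a direct summand of `A` as a right `A`-module, and `Φ(Ψ(N)) = N`. -/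
theorem psi_of_summand {R E : Type*} [CommRing R] [AddCommGroup E] [Module R E]
    (N : Submodule R E) (hN : ∃ N' : Submodule R E, N ⊓ N' = ⊥ ∧ N ⊔ N' = ⊤) :
    IsRightIdeal (psi N) ∧
    (∃ J : Submodule R (Module.End R E), IsRightIdeal J ∧ psi N ⊓ J = ⊥ ∧ psi N ⊔ J = ⊤) ∧
    phi (psi N) = N := by
  obtain ⟨N', hinf, hsup⟩ := hN
  have hE : IsCompl N N' := IsCompl.of_eq hinf hsup
  have hA : IsCompl (psi N) (psi N') := isCompl_psi hE
  exact ⟨isRightIdeal_psi N,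
    ⟨psi N', isRightIdeal_psi N', hA.inf_eq_bot, hA.sup_eq_top⟩,
    phi_psi_of_isCompl hE⟩
end

section
/- Let k be a field, V a finite-dimensional k-vector space, B a nondegenerate alternating bilinear form on V, and σ the adjoint involution of B. Then for any two subspaces N₁, N₂ of V one has Ψ(N₁) ⊆ Ψ(N₂)^⊥ if and only if N₁ ⊆ N₂^⊥; equivalently, for right ideals I₁, I₂ of End_k(V), I₁ ⊆ I₂^⊥ if and only if Φ(I₁) ⊆ Φ(I₂)^⊥. -/
/-- For a bilinear form `B` on `V` and a subspace `N`,
`N^⊥ = {v ∈ V : B(n, v) = 0 for all n ∈ N}`. -/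
def subPerp {k V : Type*} [CommRing k] [AddCommGroup V] [Module k V]
    (B : V →ₗ[k] V →ₗ[k] k) (N : Submodule k V) : Submodule k V where
  carrier := {v | ∀ n ∈ N, B n v = 0}
  add_mem' := by
    intro x y hx hy n hn
    simp [map_add, hx n hn, hy n hn]
  zero_mem' := by
    intro n hn
    simp
  smul_mem' := by
    intro c x hx n hn
    simp [hx n hn]

/-!
For `x ∈ I` and `y ∈ J`, moving `x` across `B` shows that `σ x * y = 0` exactly when
`B (x u) (y v) = 0` for all `u` and `v`. As `phi I` and `phi J` are spanned by the vectors `x u`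
and `y v`, this settles the case of ideals. The case of submodules is that of the ideals `psi N`,
since a direct summand `N` is the range of a projection, so that `phi (psi N) = N`.
-/

section EndomorphismIdeals

variable {R E : Type*} [CommRing R] [AddCommGroup E] [Module R E]
  {N : Submodule R E} {I J : Submodule R (Module.End R E)}

theorem mem_psi_iff {f : Module.End R E} : f ∈ psi N ↔ ∀ v, f v ∈ N :=
  Set.range_subset_iff

theorem phi_le_iff_le_psi : phi I ≤ N ↔ I ≤ psi N := by
  simp only [phi, Submodule.span_le, Set.iUnion_subset_iff, SetLike.coe_subset_coe]
  rfl

theorem phi_le_iff : phi I ≤ N ↔ ∀ f ∈ I, ∀ v, f v ∈ N :=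
  phi_le_iff_le_psi.trans (forall₂_congr fun _ _ => mem_psi_iff)

theorem isSummand_iff_isComplemented : IsSummand N ↔ IsComplemented N :=
  exists_congr fun _ => by rw [isCompl_iff, disjoint_iff, codisjoint_iff]

theorem isSummand_of_isSemisimpleModule [IsSemisimpleModule R E] (N : Submodule R E) :
    IsSummand N :=
  isSummand_iff_isComplemented.mpr (exists_isCompl N)

theorem IsSummand.phi_psi (hN : IsSummand N) : phi (psi N) = N := by
  obtain ⟨N', hcompl⟩ := isSummand_iff_isComplemented.mp hN
  have hmem : N.projection N' hcompl ∈ psi N :=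
    mem_psi_iff.mpr (Submodule.projection_apply_mem hcompl)
  refine le_antisymm (phi_le_iff_le_psi.mpr le_rfl) ?_
  calc
    N = LinearMap.range (N.projection N' hcompl) := (Submodule.range_projection hcompl).symm
    _ ≤ phi (psi N) := phi_le_iff_le_psi.mp le_rfl hmem

theorem mem_subPerp_phi_iff {B : E →ₗ[R] E →ₗ[R] R} {w : E} :
    w ∈ subPerp B (phi I) ↔ ∀ f ∈ I, ∀ v, B (f v) w = 0 :=
  phi_le_iff (N := LinearMap.ker (B.flip w))

theorem phi_le_subPerp_phi_iff {B : E →ₗ[R] E →ₗ[R] R} :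
    phi I ≤ subPerp B (phi J) ↔ ∀ x ∈ I, ∀ y ∈ J, ∀ u v, B (y v) (x u) = 0 := by
  simp only [phi_le_iff, mem_subPerp_phi_iff]
  exact forall₂_congr fun _ _ => ⟨fun h y hy u => h u y hy, fun h u y hy => h y hy u⟩

end EndomorphismIdeals

theorem comp_eq_zero_iff_of_isAdjointPair {R M M₁ M₂ M₃ : Type*} [CommSemiring R]
    [AddCommMonoid M] [Module R M] [AddCommMonoid M₁] [Module R M₁]
    [AddCommMonoid M₂] [Module R M₂] [AddCommMonoid M₃] [Module R M₃]
    {B : M →ₗ[R] M →ₗ[R] M₃} {B' : M₁ →ₗ[R] M₁ →ₗ[R] M₃} (hB : B.SeparatingRight)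
    {f : M → M₁} {g : M₁ →ₗ[R] M} (hfg : LinearMap.IsAdjointPair B B' f g)
    {h : M₂ →ₗ[R] M₁} :
    g ∘ₗ h = 0 ↔ ∀ u v, B' (f u) (h v) = 0 :=
  calc
    g ∘ₗ h = 0 ↔ ∀ v, g (h v) = 0 := LinearMap.ext_iff
    _ ↔ ∀ v u, B u (g (h v)) = 0 :=
      forall_congr' fun v => ⟨fun hv u => by rw [hv, map_zero], hB (g (h v))⟩
    _ ↔ ∀ u v, B u (g (h v)) = 0 := forall_comm
    _ ↔ ∀ u v, B' (f u) (h v) = 0 := by simp only [hfg _ _]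

theorem psi_le_perp_iff_general {R E : Type*} [CommRing R] [AddCommGroup E] [Module R E]
    {B : E →ₗ[R] E →ₗ[R] R} (hrefl : B.IsRefl) (hsep : B.SeparatingRight)
    {σ : Module.End R E → Module.End R E}
    (hσ : ∀ f : Module.End R E, LinearMap.IsAdjointPair B B f (σ f)) :
    (∀ N₁ N₂ : Submodule R E, IsSummand N₁ → IsSummand N₂ →
        ((∀ x ∈ psi N₁, ∀ y ∈ psi N₂, σ x * y = 0) ↔ N₁ ≤ subPerp B N₂)) ∧
    (∀ I₁ I₂ : Submodule R (Module.End R E),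
        (∀ x ∈ I₁, ∀ y ∈ I₂, σ x * y = 0) ↔ phi I₁ ≤ subPerp B (phi I₂)) := by
  have hmul (x y : Module.End R E) : σ x * y = 0 ↔ ∀ u v, B (y v) (x u) = 0 :=
    (comp_eq_zero_iff_of_isAdjointPair hsep (hσ x)).trans
      (forall₂_congr fun _ _ => hrefl.eq_iff)
  have hideals (I₁ I₂ : Submodule R (Module.End R E)) :
      (∀ x ∈ I₁, ∀ y ∈ I₂, σ x * y = 0) ↔ phi I₁ ≤ subPerp B (phi I₂) := by
    simp only [hmul, phi_le_subPerp_phi_iff]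
  refine ⟨fun N₁ N₂ hN₁ hN₂ => ?_, hideals⟩
  rw [hideals, hN₁.phi_psi, hN₂.phi_psi]

/-- Let `B` be a nondegenerate alternating bilinear form on a finite-dimensional vector space
`V` and `σ` the adjoint involution of `B`. For subspaces `N₁, N₂` of `V` one has
`Ψ(N₁) ⊆ Ψ(N₂)^⊥` iff `N₁ ⊆ N₂^⊥`; equivalently, for right ideals `I₁, I₂` of `End_k(V)`,
`I₁ ⊆ I₂^⊥` iff `Φ(I₁) ⊆ Φ(I₂)^⊥`. Here `I^⊥ = {x : σ(x) ∘ y = 0 for all y ∈ I}`. -/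
theorem psi_le_perp_iff (k V : Type*) [Field k] [AddCommGroup V] [Module k V]
    [FiniteDimensional k V] (B : V →ₗ[k] V →ₗ[k] k)
    (halt : ∀ v : V, B v v = 0)
    (hnd₁ : ∀ u : V, (∀ v : V, B u v = 0) → u = 0)
    (hnd₂ : ∀ v : V, (∀ u : V, B u v = 0) → v = 0)
    (σ : Module.End k V → Module.End k V)
    (hσ : ∀ (f : Module.End k V) (u v : V), B (f u) v = B u (σ f v)) :
    (∀ N₁ N₂ : Submodule k V,
        (∀ x ∈ psi N₁, ∀ y ∈ psi N₂, σ x * y = 0) ↔ N₁ ≤ subPerp B N₂) ∧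
    (∀ I₁ I₂ : Submodule k (Module.End k V), IsRightIdeal I₁ → IsRightIdeal I₂ →
        ((∀ x ∈ I₁, ∀ y ∈ I₂, σ x * y = 0) ↔ phi I₁ ≤ subPerp B (phi I₂))) := by
  obtain ⟨hsub, hideal⟩ := psi_le_perp_iff_general (LinearMap.IsAlt.isRefl halt) hnd₂ hσ
  exact ⟨fun N₁ N₂ => hsub N₁ N₂ (isSummand_of_isSemisimpleModule N₁)
    (isSummand_of_isSemisimpleModule N₂), fun I₁ I₂ _ _ => hideal I₁ I₂⟩
end

section
/- Let R be a commutative ring, M an R-module, and B an alternating R-bilinear form on M. If N is a submodule of M such that for every maximal ideal m of R the localization of N at m is a cyclic module over the localization of R at m, then B(u, v) = 0 for all u, v ∈ N; in particular, every direct summand of M of rank 1 is totally isotropic. -/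
/-!
Two multiples of a single element are orthogonal for an alternating form, so the form vanishes on
cyclic modules. Vanishing of `B u v` may be checked at each maximal ideal `m`; there, after
multiplication by elements outside `m`, both `u` and `v` become multiples of the numerator of a
generator of the localization at `m`, and the cyclic case applies without localizing the form.
-/

section Localization

open Submodule

variable {R A N N' : Type*} [CommSemiring R] [CommSemiring A] [Algebra R A]
  [AddCommMonoid N] [Module R N] [AddCommMonoid N'] [Module R N'] [Module A N']
  [IsScalarTower R A N'] (S : Submonoid R) (f : N →ₗ[R] N') [IsLocalizedModule S f]

theorem apply_mem_localized₀_iff {p : Submodule R N} {x : N} :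
    f x ∈ p.localized₀ S f ↔ ∃ s : S, s • x ∈ p := by
  refine ⟨?_, fun ⟨s, hs⟩ ↦ ⟨s • x, hs, s, IsLocalizedModule.mk'_cancel f x s⟩⟩
  rintro ⟨y, hy, s, hys⟩
  rw [IsLocalizedModule.mk'_eq_iff, ← LinearMap.map_smul_of_tower,
    IsLocalizedModule.eq_iff_exists S f] at hys
  obtain ⟨c, hc⟩ := hys
  exact ⟨c * s, by rw [mul_smul, ← hc]; exact p.smul_mem (c : R) hy⟩

theorem exists_localized'_span_singleton_eq_top [IsLocalization S A] {g : N'}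
    (hg : span A {g} = ⊤) : ∃ n : N, (span R {n}).localized' A S f = ⊤ := by
  obtain ⟨⟨n, s⟩, rfl⟩ := IsLocalizedModule.mk'_surjective S f g
  refine ⟨n, top_le_iff.mp (hg ▸ ?_)⟩
  exact (span_singleton_le_iff_mem _ _).mpr ⟨n, mem_span_singleton_self n, s, rfl⟩

end Localization

section Alternating

open Submodule

theorem isAlt_apply_eq_zero_of_mem_span_singleton {R R₁ M P : Type*} [CommSemiring R]
    [CommSemiring R₁] [AddCommMonoid M] [Module R₁ M] [AddCommMonoid P] [Module R P]
    {I₁ I₂ : R₁ →+* R} {B : M →ₛₗ[I₁] M →ₛₗ[I₂] P} (hB : B.IsAlt) {n u v : M}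
    (hu : u ∈ span R₁ {n}) (hv : v ∈ span R₁ {n}) : B u v = 0 := by
  obtain ⟨a, rfl⟩ := mem_span_singleton.mp hu
  obtain ⟨b, rfl⟩ := mem_span_singleton.mp hv
  simp [hB.self_eq_zero n]

variable {R N P : Type*} [CommSemiring R] [AddCommMonoid N] [Module R N] [AddCommMonoid P]
  [Module R P] {B : N →ₗ[R] N →ₗ[R] P}

theorem exists_smul_isAlt_apply_eq_zero_of_span_singleton_eq_top {A N' : Type*} [CommSemiring A]
    [Algebra R A] [AddCommMonoid N'] [Module R N'] [Module A N'] [IsScalarTower R A N']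
    (S : Submonoid R) [IsLocalization S A] (f : N →ₗ[R] N') [IsLocalizedModule S f]
    (hB : B.IsAlt) {g : N'} (hg : span A {g} = ⊤) (u v : N) : ∃ s : S, s • B u v = 0 := by
  obtain ⟨n, hn⟩ := exists_localized'_span_singleton_eq_top S f hg
  have exists_smul_mem (x : N) : ∃ s : S, s • x ∈ span R {n} :=
    (apply_mem_localized₀_iff S f).mp (hn.ge (mem_top : f x ∈ (⊤ : Submodule A N')))
  obtain ⟨s, hs⟩ := exists_smul_mem u
  obtain ⟨t, ht⟩ := exists_smul_mem v
  refine ⟨t * s, ?_⟩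
  calc (t * s) • B u v = B (s • u) (t • v) := by
        simp [Submonoid.smul_def, mul_smul]
    _ = 0 := isAlt_apply_eq_zero_of_mem_span_singleton hB hs ht

theorem locally_cyclic_totally_isotropic_general (hB : B.IsAlt)
    (hN : ∀ (m : Ideal R) [m.IsMaximal],
      ∃ g : LocalizedModule m.primeCompl N, span (Localization m.primeCompl) {g} = ⊤) :
    B = 0 := by
  ext u v
  refine Module.eq_zero_of_localization_maximal (R := R) _
    (fun m _ ↦ LocalizedModule.mkLinearMap m.primeCompl P) _ fun m _ ↦ ?_
  obtain ⟨g, hg⟩ := hN m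
  exact (IsLocalizedModule.eq_zero_iff m.primeCompl _).mpr <|
    exists_smul_isAlt_apply_eq_zero_of_span_singleton_eq_top m.primeCompl
      (LocalizedModule.mkLinearMap m.primeCompl N) hB hg u v

end Alternating

/-- Let `B` be an alternating bilinear form on an `R`-module `M`. If `N` is a submodule of `M`
whose localization at every maximal ideal `m` of `R` is a cyclic module over the localization
of `R` at `m`, then `B(u, v) = 0` for all `u, v ∈ N`; in particular, every direct summand of
`M` of rank `1` is totally isotropic. -/
theorem locally_cyclic_totally_isotropic {R M : Type*} [CommRing R] [AddCommGroup M]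
    [Module R M] (B : M →ₗ[R] M →ₗ[R] R) (halt : ∀ u : M, B u u = 0)
    (N : Submodule R M)
    (hN : ∀ (m : Ideal R) [m.IsMaximal],
      ∃ g : LocalizedModule m.primeCompl N,
        Submodule.span (Localization m.primeCompl) {g} = ⊤) :
    ∀ u ∈ N, ∀ v ∈ N, B u v = 0 := by
  have hBN : B.domRestrict₁₂ N N = 0 :=
    locally_cyclic_totally_isotropic_general (fun u ↦ halt u) hN
  exact fun u hu v hv ↦ LinearMap.congr_fun₂ hBN ⟨u, hu⟩ ⟨v, hv⟩
end

section
/- For all natural numbers a and b, the following identity holds in the polynomial ring ℤ[z]: (∑_λ z^{|λ|}) · ∏_{k=1}^{a} (z^k − 1) = ∏_{k=b+1}^{a+b} (z^k − 1), where the sum is taken over all partitions λ = (λ₁, …, λ_a) with b ≥ λ₁ ≥ λ₂ ≥ … ≥ λ_a ≥ 0, i.e., over all antitone functions λ : Fin a → ℕ with all values at most b, and |λ| = λ₁ + … + λ_a. -/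
open Polynomial

/-! Removing the largest part `c` of a partition in an `(a + 1) × b` box leaves a partition in an
`a × c` box. Hence the generating functions `G a b` satisfy `G (a + 1) b = ∑ c ≤ b, q ^ c * G a c`,
and so the `q`-Pascal rule `G (a + 1) (b + 1) = G (a + 1) b + q ^ (b + 1) * G a (b + 1)`. After
multiplication by `∏ k ≤ a, (q ^ k - 1)` this becomes a recursion that the products
`(q ^ (b + 1) - 1) ⋯ (q ^ (a + b) - 1)` also satisfy. -/

theorem antitone_fin_cons {α : Type*} [Preorder α] {n : ℕ} {c : α} {l : Fin n → α} :
    Antitone (Fin.cons c l : Fin (n + 1) → α) ↔ (∀ i, l i ≤ c) ∧ Antitone l := by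
  rw [antitone_iff_forall_lt, antitone_iff_forall_lt]
  exact Fin.liftFun_cons (· ≥ ·)

/-- The partitions fitting in an `a × b` box: weakly decreasing sequences of `a` parts, each at
most `b`, where parts equal to zero are allowed. -/
def boxPartitions (a b : ℕ) : Finset (Fin a → ℕ) :=
  {l ∈ Finset.Iic fun _ ↦ b | Antitone l}

theorem mem_boxPartitions {a b : ℕ} {l : Fin a → ℕ} :
    l ∈ boxPartitions a b ↔ (∀ i, l i ≤ b) ∧ Antitone l := by
  simp [boxPartitions, Pi.le_def]

theorem cons_mem_boxPartitions {a b c : ℕ} {l : Fin a → ℕ} :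
    (Fin.cons c l : Fin (a + 1) → ℕ) ∈ boxPartitions (a + 1) b ↔
      c ≤ b ∧ l ∈ boxPartitions a c := by
  simp only [mem_boxPartitions, antitone_fin_cons, Fin.forall_fin_succ, Fin.cons_zero,
    Fin.cons_succ]
  exact ⟨fun ⟨⟨hc, _⟩, hl⟩ ↦ ⟨hc, hl⟩,
    fun ⟨hc, hl⟩ ↦ ⟨⟨hc, fun i ↦ (hl.1 i).trans hc⟩, hl⟩⟩

/-- The generating function, evaluated at `q`, of the partitions fitting in an `a × b` box, by
size; it is the Gaussian binomial coefficient `(a + b choose a)` at `q`. -/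
def boxGenFun {R : Type*} [Semiring R] (q : R) (a b : ℕ) : R :=
  ∑ l ∈ boxPartitions a b, q ^ ∑ i, l i

section Semiring

variable {R : Type*} [Semiring R] (q : R)

theorem sum_antitone_fin_eq_boxGenFun (a b : ℕ) :
    ∑ l : Fin a → Fin (b + 1) with ∀ i j, i ≤ j → l j ≤ l i, q ^ ∑ i, (l i : ℕ) =
      boxGenFun q a b := by
  refine Finset.sum_bij (fun l _ i ↦ (l i : ℕ)) ?mem ?inj ?surj fun _ _ ↦ rfl
  case mem =>
    intro l hl
    exact mem_boxPartitions.mpr ⟨fun i ↦ (l i).is_le, (Finset.mem_filter.mp hl).2⟩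
  case inj =>
    intro l _ m _ h
    exact funext fun i ↦ Fin.ext (congrFun h i)
  case surj =>
    intro l hl
    obtain ⟨hb, hl⟩ := mem_boxPartitions.mp hl
    exact ⟨fun i ↦ ⟨l i, Nat.lt_succ_of_le (hb i)⟩,
      Finset.mem_filter.mpr ⟨Finset.mem_univ _, fun _ _ hij ↦ hl hij⟩, rfl⟩

theorem boxGenFun_zero_left (b : ℕ) : boxGenFun q 0 b = 1 := by
  have h : boxPartitions 0 b = {0} := by
    ext l
    simp [mem_boxPartitions, Subsingleton.elim l 0, Subsingleton.antitone]
  simp [boxGenFun, h]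

theorem boxGenFun_succ_left (a b : ℕ) :
    boxGenFun q (a + 1) b = ∑ c ∈ Finset.range (b + 1), q ^ c * boxGenFun q a c := by
  simp only [boxGenFun, Finset.mul_sum, Finset.sum_sigma']
  symm
  refine Finset.sum_bij' (fun p _ ↦ Fin.cons p.1 p.2) (fun l _ ↦ ⟨l 0, Fin.tail l⟩)
    ?cons_mem ?uncons_mem (by simp) (by simp) ?weight
  case cons_mem =>
    simp [cons_mem_boxPartitions]
  case uncons_mem =>
    intro l hl
    rw [← Fin.cons_self_tail l, cons_mem_boxPartitions] at hl
    simpa [Nat.lt_succ_iff] using hl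
  case weight =>
    simp [Fin.sum_univ_succ, pow_add]

theorem boxGenFun_zero_right (a : ℕ) : boxGenFun q a 0 = 1 := by
  induction a with
  | zero => exact boxGenFun_zero_left q 0
  | succ a ih => simp [boxGenFun_succ_left, ih]

theorem boxGenFun_succ_succ (a b : ℕ) :
    boxGenFun q (a + 1) (b + 1) =
      boxGenFun q (a + 1) b + q ^ (b + 1) * boxGenFun q a (b + 1) := by
  rw [boxGenFun_succ_left, Finset.sum_range_succ, ← boxGenFun_succ_left]

end Semiring

section CommRing

variable {R : Type*} [CommRing R] (q : R)

theorem prod_Icc_pow_sub_one_succ_succ (a b : ℕ) :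
    ∏ k ∈ Finset.Icc (b + 1 + 1) (a + 1 + (b + 1)), (q ^ k - 1) =
      ∏ k ∈ Finset.Icc (b + 1) (a + 1 + b), (q ^ k - 1) +
        q ^ (b + 1) * (q ^ (a + 1) - 1) *
          ∏ k ∈ Finset.Icc (b + 1 + 1) (a + (b + 1)), (q ^ k - 1) := by
  have split_top : ∏ k ∈ Finset.Icc (b + 1 + 1) (a + 1 + (b + 1)), (q ^ k - 1) =
      (∏ k ∈ Finset.Icc (b + 1 + 1) (a + (b + 1)), (q ^ k - 1)) * (q ^ (a + (b + 1) + 1) - 1) := by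
    rw [Nat.add_right_comm a 1, Finset.prod_Icc_succ_top (by lia)]
  have split_bot : ∏ k ∈ Finset.Icc (b + 1) (a + 1 + b), (q ^ k - 1) =
      (q ^ (b + 1) - 1) * ∏ k ∈ Finset.Icc (b + 1 + 1) (a + (b + 1)), (q ^ k - 1) := by
    rw [add_assoc a, add_comm 1 b, ← Finset.mul_prod_Ioc_eq_prod_Icc (by lia),
      Finset.Icc_add_one_left_eq_Ioc]
  rw [split_top, split_bot]
  ring

theorem boxGenFun_mul_prod_Icc_pow_sub_one (a b : ℕ) :
    boxGenFun q a b * ∏ k ∈ Finset.Icc 1 a, (q ^ k - 1) =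
      ∏ k ∈ Finset.Icc (b + 1) (a + b), (q ^ k - 1) := by
  induction a generalizing b with
  | zero => simp [boxGenFun_zero_left]
  | succ a iha =>
    induction b with
    | zero => simp [boxGenFun_zero_right]
    | succ b ihb =>
      rw [boxGenFun_succ_succ, add_mul, ihb, prod_Icc_pow_sub_one_succ_succ, ← iha (b + 1),
        Finset.prod_Icc_succ_top (by lia)]
      ring

theorem partition_box_generating_identity_general (a b : ℕ) :
    (∑ l : Fin a → Fin (b + 1) with ∀ i j, i ≤ j → l j ≤ l i, q ^ ∑ i, (l i : ℕ)) *
        ∏ k ∈ Finset.Icc 1 a, (q ^ k - 1) =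
      ∏ k ∈ Finset.Icc (b + 1) (a + b), (q ^ k - 1) := by
  rw [sum_antitone_fin_eq_boxGenFun, boxGenFun_mul_prod_Icc_pow_sub_one]

end CommRing

/-- In `ℤ[z]`: `(∑_λ z^{|λ|}) · ∏_{k=1}^{a} (z^k − 1) = ∏_{k=b+1}^{a+b} (z^k − 1)`, where the
sum runs over all partitions `λ = (λ₁ ≥ … ≥ λ_a)` fitting in an `a × b` box, encoded as
antitone functions `λ : Fin a → Fin (b+1)`, and `|λ| = λ₁ + … + λ_a`. -/
theorem partition_box_generating_identity (a b : ℕ) :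
    (∑ l ∈ Finset.univ.filter (fun f : Fin a → Fin (b + 1) => ∀ i j : Fin a, i ≤ j → f j ≤ f i),
        (X : Polynomial ℤ) ^ (∑ i : Fin a, (l i : ℕ))) *
      ∏ k ∈ Finset.Icc 1 a, ((X : Polynomial ℤ) ^ k - 1) =
    ∏ k ∈ Finset.Icc (b + 1) (a + b), ((X : Polynomial ℤ) ^ k - 1) :=
  partition_box_generating_identity_general X a b
end
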